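/- Let K > 0, β > 0, l ≥ 0, let c ∈ X satisfy c_n = 0 for all |n| > l, let p > 1 be an integer and N > p·l. Then for every x ∈ X_β and every integer n > N: |(K/p!)·((x+c)^{*p})_n| ≤ (K/p!)·( Σ_{k=0}^{p-1} binom(p,k) Σ_{j=-lk}^{lk} |(c^{*k})_j| · (10β)^{p-k-1} · (N+1)²/(N-j+1)² ) · β/(|n|+1)². -/

import Mathlib

open scoped Real
open Complex Filter

/-- Convolution of two two-sided sequences of complex numbers. -/
noncomputable def conv (x y : ℤ → ℂ) : ℤ → ℂ := fun n => ∑' k : ℤ, x k * y (n - k)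

/-- `convPow x k` is the `k`-fold convolution power `x^{*k}`;
`x^{*0}` is the unit (Kronecker delta at `0`). -/
noncomputable def convPow (x : ℤ → ℂ) : ℕ → ℤ → ℂ
  | 0 => fun n => if n = 0 then 1 else 0
  | k + 1 => conv (convPow x k) x

/-- Membership in `X_β`: decay `|x_n| ≤ β/(|n|+1)^2` and the symmetry `x_{-n} = conj x_n`. -/
def memX (β : ℝ) (x : ℤ → ℂ) : Prop :=
  (∀ n : ℤ, ‖x n‖ ≤ β / (|(n : ℝ)| + 1) ^ 2) ∧ (∀ n : ℤ, x (-n) = starRingEnd ℂ (x n))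

/-!
Binomial expansion in the commutative ring `ℓ¹(ℤ)` writes `(x + c)^{*p}` as a sum of the terms
`binom(p,k) c^{*k} * x^{*(p-k)}`. The term `k = p` vanishes at `n > N` because `c^{*p}` lives on
`[-pl, pl]`, and for `k < p` the factor `x^{*(p-k)}` decays quadratically with constant
`(10β)^{p-k-1} β`, since `1/(|n|+1)²` convolved with itself is at most `10/(|n|+1)²`.

Comparing `1/(n-j+1)²` with `(N+1)²/((N-j+1)² (n+1)²)` fails for individual `j < 0`. It holds after
adding the terms `j` and `-j`, which have the same weight `|(c^{*k})_j|` by conjugate symmetry: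
`1/(1-r)² + 1/(1+r)² = 2(1+r²)/(1-r²)²` increases with `|r| < 1`, here `r = j/(N+1)` or `j/(n+1)`.
-/

section Convolution

theorem summable_norm_mul_comp_sub {G R : Type*} [AddGroup G] [NormedRing R] {f g : G → R}
    (hf : Summable fun k => ‖f k‖) (hg : Summable fun k => ‖g k‖) :
    Summable fun q : G × G => ‖f q.1 * g (q.2 - q.1)‖ :=
  (((Equiv.refl G).prodShear Equiv.subRight).summable_iff
    (f := fun q : G × G => ‖f q.1 * g q.2‖)).2 (hf.mul_norm hg)

variable {x y z : ℤ → ℂ}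

theorem summable_norm_conv_term (hx : Summable fun n => ‖x n‖) (hy : Summable fun n => ‖y n‖)
    (n : ℤ) : Summable fun k => ‖x k * y (n - k)‖ :=
  (summable_norm_mul_comp_sub hx hy).prod_symm.prod_factor n

theorem summable_norm_conv (hx : Summable fun n => ‖x n‖) (hy : Summable fun n => ‖y n‖) :
    Summable fun n => ‖conv x y n‖ :=
  .of_nonneg_of_le (fun _ => norm_nonneg _)
    (fun n => norm_tsum_le_tsum_norm (summable_norm_conv_term hx hy n))
    (summable_norm_mul_comp_sub hx hy).prod_symm.prod

theorem conv_comm (x y : ℤ → ℂ) : conv x y = conv y x := by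
  funext n
  unfold conv
  rw [← (Equiv.subLeft n).tsum_eq]
  exact tsum_congr fun k => by simp [mul_comm]

theorem conv_assoc (hx : Summable fun n => ‖x n‖) (hy : Summable fun n => ‖y n‖)
    (hz : Summable fun n => ‖z n‖) : conv (conv x y) z = conv x (conv y z) := by
  funext n
  have summable_triple :
      Summable (Function.uncurry fun k m => x k * y (m - k) * z (n - m)) := by
    refine .of_norm_bounded ((summable_norm_mul_comp_sub hx hy).mul_right (∑' j, ‖z j‖))
      fun q => ?_
    rw [Function.uncurry_def, norm_mul (x q.1 * y (q.2 - q.1))]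
    gcongr
    exact hz.le_tsum (n - q.2) fun _ _ => norm_nonneg _
  calc ∑' m, (∑' k, x k * y (m - k)) * z (n - m)
      = ∑' m, ∑' k, x k * y (m - k) * z (n - m) := tsum_congr fun m => tsum_mul_right.symm
    _ = ∑' k, ∑' m, x k * y (m - k) * z (n - m) := summable_triple.tsum_comm
    _ = ∑' k, x k * ∑' j, y j * z (n - k - j) := tsum_congr fun k => by
      rw [← tsum_mul_left, ← (Equiv.addRight k).tsum_eq]
      exact tsum_congr fun j => by simp [mul_assoc, sub_sub, add_comm]

theorem conv_add (hx : Summable fun n => ‖x n‖) (hy : Summable fun n => ‖y n‖)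
    (hz : Summable fun n => ‖z n‖) : conv x (y + z) = conv x y + conv x z := by
  funext n
  simp only [conv, Pi.add_apply, mul_add]
  exact (summable_norm_conv_term hx hy n).of_norm.tsum_add
    (summable_norm_conv_term hx hz n).of_norm

theorem convPow_zero_conv (x y : ℤ → ℂ) : conv (convPow x 0) y = y := by
  funext n
  simp [conv, convPow]

theorem convPow_one (x : ℤ → ℂ) : convPow x 1 = x :=
  convPow_zero_conv x x

theorem summable_norm_convPow_zero (x : ℤ → ℂ) : Summable fun n => ‖convPow x 0 n‖ :=
  summable_of_ne_finset_zero (s := {0}) fun n hn => by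
    simpa [convPow] using hn

end Convolution

section Binomial

/-- The space `ℓ¹(ℤ)` of absolutely summable sequences, a commutative ring under `conv`. It is
introduced to apply the binomial theorem to convolution powers. -/
def ellOne : AddSubgroup (ℤ → ℂ) where
  carrier := {x | Summable fun n => ‖x n‖}
  zero_mem' := by simp [summable_zero]
  add_mem' hx hy := .of_nonneg_of_le (fun _ => norm_nonneg _) (fun _ => norm_add_le _ _) (hx.add hy)
  neg_mem' hx := by simpa using hx

namespace ellOne

noncomputable instance : CommRing ellOne :=
  { (inferInstance : AddCommGroup ellOne) with
    mul := fun x y => ⟨conv x y, summable_norm_conv x.2 y.2⟩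
    one := ⟨convPow 0 0, summable_norm_convPow_zero 0⟩
    mul_assoc := fun x y z => Subtype.ext (conv_assoc x.2 y.2 z.2)
    mul_comm := fun x y => Subtype.ext (conv_comm x y)
    one_mul := fun x => Subtype.ext (convPow_zero_conv 0 x)
    mul_one := fun x => Subtype.ext ((conv_comm _ _).trans (convPow_zero_conv 0 x))
    left_distrib := fun x y z => Subtype.ext (conv_add x.2 y.2 z.2)
    right_distrib := fun x y z => Subtype.ext <| by
      change conv (x + y : ℤ → ℂ) z = conv x z + conv y z
      rw [conv_comm, conv_add z.2 x.2 y.2, conv_comm z, conv_comm z]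
    zero_mul := fun x => Subtype.ext <| funext fun n => by
      change conv 0 x n = 0
      simp [conv]
    mul_zero := fun x => Subtype.ext <| funext fun n => by
      change conv x 0 n = 0
      simp [conv] }

theorem coe_mul (x y : ellOne) : ((x * y : ellOne) : ℤ → ℂ) = conv x y :=
  rfl

theorem coe_pow (x : ellOne) (k : ℕ) : ((x ^ k : ellOne) : ℤ → ℂ) = convPow x k := by
  induction k with
  | zero => rw [pow_zero]; rfl
  | succ k ih => rw [pow_succ, coe_mul, ih, convPow]

end ellOne

theorem convPow_add {x y : ℤ → ℂ} (hx : Summable fun n => ‖x n‖) (hy : Summable fun n => ‖y n‖)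
    (p : ℕ) :
    convPow (x + y) p =
      ∑ k ∈ Finset.range (p + 1), p.choose k • conv (convPow x k) (convPow y (p - k)) := by
  have binomial := congrArg (Subtype.val : ellOne → ℤ → ℂ)
    (add_pow (⟨x, hx⟩ : ellOne) ⟨y, hy⟩ p)
  simpa only [mul_comm _ (Nat.cast _), ← nsmul_eq_mul, AddSubgroup.val_finsetSum,
    AddSubgroup.coe_nsmul, AddSubgroup.coe_add, ellOne.coe_mul, ellOne.coe_pow] using binomial

end Binomial

section SupportAndSymmetry

variable {c : ℤ → ℂ}

theorem convPow_eq_zero_of_lt_abs {l : ℤ} (hc : ∀ n, l < |n| → c n = 0) (k : ℕ) :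
    ∀ n, l * k < |n| → convPow c k n = 0 := by
  induction k with
  | zero =>
    intro n hn
    have : n ≠ 0 := by simpa using hn
    simp [convPow, this]
  | succ k ih =>
    intro n hn
    refine (tsum_congr fun j => ?_).trans tsum_zero
    rcases lt_or_ge (l * k) |j| with hj | hj
    · rw [ih j hj, zero_mul]
    · have : l < |n - j| := by
        have := abs_sub_abs_le_abs_sub n j
        push_cast at hn
        linarith
      rw [hc _ this, mul_zero]

theorem convPow_neg (hc : ∀ n, c (-n) = starRingEnd ℂ (c n)) (k : ℕ) :
    ∀ n, convPow c k (-n) = starRingEnd ℂ (convPow c k n) := by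
  induction k with
  | zero => intro n; by_cases h : n = 0 <;> simp [convPow, h]
  | succ k ih =>
    intro n
    simp only [convPow, conv]
    rw [Complex.conj_tsum, ← (Equiv.neg ℤ).tsum_eq]
    refine tsum_congr fun j => ?_
    rw [Equiv.neg_apply, map_mul, ih, ← hc, neg_sub_neg, neg_sub]

end SupportAndSymmetry

section QuadraticDecay

/-- The weight `(|t| + 1)²` measuring quadratic decay. It is defined on `ℝ`, and evaluated at
integers through the cast. -/
def sqWeight (t : ℝ) : ℝ := (|t| + 1) ^ 2

/-- Quadratic decay `|x_n| ≤ β / (|n| + 1)²`: membership in `X_β` without the conjugate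
symmetry. -/
def HasQuadraticDecay (β : ℝ) (x : ℤ → ℂ) : Prop :=
  ∀ n : ℤ, ‖x n‖ ≤ β / sqWeight n

theorem sqWeight_pos (t : ℝ) : 0 < sqWeight t := by
  unfold sqWeight
  positivity

theorem sqWeight_add_le (s t : ℝ) : sqWeight (s + t) ≤ 2 * (sqWeight s + sqWeight t) :=
  calc (|s + t| + 1) ^ 2 ≤ ((|s| + 1) + (|t| + 1)) ^ 2 := by
        gcongr ?_ ^ 2
        linarith [abs_add_le s t]
    _ ≤ 2 * ((|s| + 1) ^ 2 + (|t| + 1) ^ 2) := add_sq_le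

theorem one_div_sqWeight_mul_le (s t : ℝ) :
    1 / sqWeight s * (1 / sqWeight t) ≤
      2 / sqWeight (s + t) * (1 / sqWeight s + 1 / sqWeight t) := by
  have hs := sqWeight_pos s
  have ht := sqWeight_pos t
  have hst := sqWeight_pos (s + t)
  rw [div_add_div _ _ hs.ne' ht.ne', div_mul_div_comm, div_mul_div_comm,
    div_le_div_iff₀ (by positivity) (by positivity)]
  nlinarith [mul_le_mul_of_nonneg_right (sqWeight_add_le s t) (mul_pos hs ht).le]

theorem hasSum_one_div_sqWeight :
    HasSum (fun n : ℤ => 1 / sqWeight n) (π ^ 2 / 6 + π ^ 2 / 6 - 1) := by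
  have hasSum_nat : HasSum (fun n : ℕ => 1 / ((n : ℝ) + 1) ^ 2) (π ^ 2 / 6) := by
    simpa using (hasSum_nat_add_iff' 1).2 hasSum_zeta_two
  have hasSum_int := HasSum.of_nat_of_neg (f := fun n : ℤ => 1 / sqWeight n)
    (by simpa [sqWeight] using hasSum_nat) (by simpa [sqWeight] using hasSum_nat)
  simpa [sqWeight] using hasSum_int

theorem hasSum_one_div_sqWeight_sub (n : ℤ) :
    HasSum (fun k : ℤ => 1 / sqWeight ((n - k : ℤ) : ℝ)) (π ^ 2 / 6 + π ^ 2 / 6 - 1) :=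
  ((Equiv.subLeft n).hasSum_iff (f := fun k : ℤ => 1 / sqWeight k)).2 hasSum_one_div_sqWeight

namespace HasQuadraticDecay

variable {a b β : ℝ} {x y : ℤ → ℂ}

theorem nonneg (hx : HasQuadraticDecay β x) : 0 ≤ β := by
  simpa [sqWeight] using (norm_nonneg _).trans (hx 0)

theorem summable_norm (hx : HasQuadraticDecay β x) : Summable fun n => ‖x n‖ :=
  .of_nonneg_of_le (fun _ => norm_nonneg _) (fun n => (hx n).trans_eq (mul_one_div _ _).symm)
    (hasSum_one_div_sqWeight.summable.mul_left β)

theorem conv (hx : HasQuadraticDecay a x) (hy : HasQuadraticDecay b y) :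
    HasQuadraticDecay (10 * a * b) (conv x y) := by
  intro n
  have ha := hx.nonneg
  have hb := hy.nonneg
  have hn := sqWeight_pos n
  have term_le (k : ℤ) : ‖x k * y (n - k)‖ ≤
      a * b * (2 / sqWeight n * (1 / sqWeight k + 1 / sqWeight ((n - k : ℤ) : ℝ))) :=
    calc ‖x k * y (n - k)‖
        ≤ a / sqWeight k * (b / sqWeight ((n - k : ℤ) : ℝ)) :=
          norm_mul_le_of_le (hx k) (hy (n - k))
      _ = a * b * (1 / sqWeight k * (1 / sqWeight ((n - k : ℤ) : ℝ))) := by ring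
      _ ≤ _ := by
          refine mul_le_mul_of_nonneg_left ?_ (mul_nonneg ha hb)
          simpa using one_div_sqWeight_mul_le k ((n - k : ℤ) : ℝ)
  have majorant := ((hasSum_one_div_sqWeight.add (hasSum_one_div_sqWeight_sub n)).mul_left
    (2 / sqWeight n)).mul_left (a * b)
  have pi_bound : 4 * (π ^ 2 / 6 + π ^ 2 / 6 - 1) ≤ 10 := by
    nlinarith [Real.pi_lt_d2, Real.pi_pos]
  calc ‖∑' k, x k * y (n - k)‖
      ≤ _ := tsum_of_norm_bounded majorant term_le
    _ = 4 * (π ^ 2 / 6 + π ^ 2 / 6 - 1) * (a * b / sqWeight n) := by ring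
    _ ≤ 10 * (a * b / sqWeight n) := by gcongr
    _ = 10 * a * b / sqWeight n := by ring

theorem convPow_succ (hx : HasQuadraticDecay β x) (m : ℕ) :
    HasQuadraticDecay ((10 * β) ^ m * β) (convPow x (m + 1)) := by
  induction m with
  | zero => simpa [convPow_one] using hx
  | succ m ih =>
    rw [convPow, show (10 * β) ^ (m + 1) * β = 10 * ((10 * β) ^ m * β) * β by ring]
    exact ih.conv hx

end HasQuadraticDecay

end QuadraticDecay

section PairedTerms

theorem one_div_sub_sq_add_one_div_add_sq_le {r s : ℝ} (hrs : |r| ≤ |s|) (hs : |s| < 1) :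
    1 / (1 - r) ^ 2 + 1 / (1 + r) ^ 2 ≤ 1 / (1 - s) ^ 2 + 1 / (1 + s) ^ 2 := by
  have pair_eq {t : ℝ} (ht : |t| < 1) :
      1 / (1 - t) ^ 2 + 1 / (1 + t) ^ 2 = 2 * (1 + t ^ 2) / (1 - t ^ 2) ^ 2 := by
    obtain ⟨h_left, h_right⟩ := abs_lt.1 ht
    have hsub : 1 - t ≠ 0 := by linarith
    have hadd : 1 + t ≠ 0 := by linarith
    rw [show 1 - t ^ 2 = (1 - t) * (1 + t) by ring]
    field_simp
    ring
  have hsq : r ^ 2 ≤ s ^ 2 := sq_le_sq.2 hrs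
  have hpos : 0 < 1 - s ^ 2 := sub_pos.2 ((sq_lt_one_iff_abs_lt_one s).2 hs)
  rw [pair_eq (hrs.trans_lt hs), pair_eq hs]
  gcongr

theorem one_div_sub_sq_add_one_div_add_sq_le_div {j P M : ℝ} (hj : |j| < P) (hPM : P ≤ M) :
    1 / (M - j) ^ 2 + 1 / (M + j) ^ 2 ≤
      P ^ 2 / (P - j) ^ 2 / M ^ 2 + P ^ 2 / (P + j) ^ 2 / M ^ 2 := by
  have hP : 0 < P := (abs_nonneg j).trans_lt hj
  have hM : 0 < M := hP.trans_le hPM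
  have scaled_le := one_div_sub_sq_add_one_div_add_sq_le (r := j / M) (s := j / P)
    (by rw [abs_div, abs_div, abs_of_pos hP, abs_of_pos hM]; gcongr)
    (by rwa [abs_div, abs_of_pos hP, div_lt_one hP])
  have rescale {t : ℝ} (ht : 0 < t) :
      1 / (1 - j / t) ^ 2 + 1 / (1 + j / t) ^ 2 = t ^ 2 / (t - j) ^ 2 + t ^ 2 / (t + j) ^ 2 := by
    rw [one_sub_div ht.ne', one_add_div ht.ne', div_pow, div_pow, one_div_div, one_div_div]
  rw [rescale hM, rescale hP] at scaled_le
  rw [← add_div, le_div_iff₀ (by positivity)]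
  exact scaled_le.trans_eq' (by ring)

theorem one_div_sqWeight_sub_add_one_div_sqWeight_add_le {j N n : ℝ} (hjN : |j| ≤ N)
    (hNn : N ≤ n) :
    1 / sqWeight (n - j) + 1 / sqWeight (n + j) ≤
      (N + 1) ^ 2 / (N - j + 1) ^ 2 / sqWeight n + (N + 1) ^ 2 / (N + j + 1) ^ 2 / sqWeight n := by
  obtain ⟨hj_left, hj_right⟩ := abs_le.1 hjN
  have hn : 0 ≤ n := (abs_nonneg j).trans (hjN.trans hNn)
  have pair_le := one_div_sub_sq_add_one_div_add_sq_le_div (hjN.trans_lt (lt_add_one N))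
    (add_le_add_left hNn 1)
  simpa only [sqWeight, abs_of_nonneg hn, abs_of_nonneg (show 0 ≤ n - j by linarith),
    abs_of_nonneg (show 0 ≤ n + j by linarith), sub_add_eq_add_sub, add_right_comm _ j]
    using pair_le

theorem sum_Icc_mul_le_of_add_neg_le {R : Type*} [CommRing R] [LinearOrder R]
    [IsStrictOrderedRing R] {a f g : ℤ → R} {L : ℤ} (ha : ∀ j, 0 ≤ a j)
    (ha_even : ∀ j, a (-j) = a j)
    (hfg : ∀ j ∈ Finset.Icc (-L) L, f j + f (-j) ≤ g j + g (-j)) :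
    ∑ j ∈ Finset.Icc (-L) L, a j * f j ≤ ∑ j ∈ Finset.Icc (-L) L, a j * g j := by
  have sum_neg (h : ℤ → R) :
      ∑ j ∈ Finset.Icc (-L) L, a j * h (-j) = ∑ j ∈ Finset.Icc (-L) L, a j * h j :=
    Finset.sum_equiv (Equiv.neg ℤ) (fun j => by simp only [Finset.mem_Icc, Equiv.neg_apply]; lia)
      fun j _ => by rw [Equiv.neg_apply, ha_even]
  have paired_le := Finset.sum_le_sum fun j hj => mul_le_mul_of_nonneg_left (hfg j hj) (ha j)
  simp only [mul_add, Finset.sum_add_distrib, sum_neg] at paired_le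
  linarith

end PairedTerms

section HighModes

theorem norm_conv_le_sum_of_norm_even {a y : ℤ → ℂ} {L : ℤ} {b N : ℝ}
    (ha : ∀ j, L < |j| → a j = 0) (ha_even : ∀ j, ‖a (-j)‖ = ‖a j‖)
    (hy : HasQuadraticDecay b y) (hLN : L ≤ N) {n : ℤ} (hNn : N ≤ n) :
    ‖conv a y n‖ ≤
      ∑ j ∈ Finset.Icc (-L) L, ‖a j‖ * ((N + 1) ^ 2 / (N - j + 1) ^ 2 * (b / sqWeight n)) := by
  have conv_eq : conv a y n = ∑ j ∈ Finset.Icc (-L) L, a j * y (n - j) :=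
    tsum_eq_sum fun j hj => by
      rw [Finset.mem_Icc, ← abs_le, not_le] at hj
      rw [ha j hj, zero_mul]
  rw [conv_eq]
  have abs_le_N {j : ℤ} (hj : j ∈ Finset.Icc (-L) L) : |(j : ℝ)| ≤ N := by
    rw [Finset.mem_Icc, ← abs_le] at hj
    exact hLN.trans' (mod_cast hj)
  calc ‖∑ j ∈ Finset.Icc (-L) L, a j * y (n - j)‖
      ≤ ∑ j ∈ Finset.Icc (-L) L, ‖a j‖ * (b / sqWeight ((n - j : ℤ) : ℝ)) :=
        norm_sum_le_of_le _ fun j _ => norm_mul_le_of_le le_rfl (hy (n - j))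
    _ ≤ _ := by
        refine sum_Icc_mul_le_of_add_neg_le (fun j => norm_nonneg _) ha_even fun j hj => ?_
        have pair_le := mul_le_mul_of_nonneg_left
          (one_div_sqWeight_sub_add_one_div_sqWeight_add_le (abs_le_N hj) hNn) hy.nonneg
        simp only [Int.cast_sub, Int.cast_neg, Int.cast_add, sub_neg_eq_add]
        calc b / sqWeight (n - j) + b / sqWeight (n + j)
            = b * (1 / sqWeight (n - j) + 1 / sqWeight (n + j)) := by ring
          _ ≤ _ := pair_le
          _ = _ := by ring

variable {β N : ℝ} {l : ℕ} {c x : ℤ → ℂ} {n : ℤ}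

theorem norm_conv_convPow_le (hc_symm : ∀ n, c (-n) = starRingEnd ℂ (c n))
    (hc_supp : ∀ n : ℤ, (l : ℤ) < |n| → c n = 0) (hx : HasQuadraticDecay β x) (k m : ℕ)
    (hlk : l * k ≤ N) (hNn : N ≤ n) :
    ‖conv (convPow c k) (convPow x (m + 1)) n‖ ≤
      (∑ j ∈ Finset.Icc (-(l * k : ℤ)) (l * k : ℤ),
        ‖convPow c k j‖ * (10 * β) ^ m * (N + 1) ^ 2 / (N - j + 1) ^ 2) *
        (β / (|(n : ℝ)| + 1) ^ 2) := by
  refine (norm_conv_le_sum_of_norm_even (convPow_eq_zero_of_lt_abs hc_supp k)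
    (fun j => by simp [convPow_neg hc_symm]) (hx.convPow_succ m) (mod_cast hlk) hNn).trans_eq ?_
  rw [Finset.sum_mul]
  refine Finset.sum_congr rfl fun j _ => ?_
  rw [sqWeight]
  ring

theorem high_modes_estimate_general (K : ℂ) (hc_symm : ∀ n, c (-n) = starRingEnd ℂ (c n))
    (hc_supp : ∀ n : ℤ, (l : ℤ) < |n| → c n = 0) {p : ℕ} (hN : p * l ≤ N)
    (hx : HasQuadraticDecay β x) (hn : N < n) :
    ‖(K / (Nat.factorial p : ℂ)) * convPow (x + c) p n‖ ≤
      (‖K‖ / (Nat.factorial p : ℝ)) *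
        (∑ k ∈ Finset.range p, (p.choose k : ℝ) *
          ∑ j ∈ Finset.Icc (-(l * k : ℤ)) (l * k : ℤ),
            ‖convPow c k j‖ * (10 * β) ^ (p - k - 1) * (N + 1) ^ 2 / (N - j + 1) ^ 2) *
        (β / (|(n : ℝ)| + 1) ^ 2) := by
  have hc_summable : Summable fun n => ‖c n‖ :=
    summable_of_ne_finset_zero (s := Finset.Icc (-(l : ℤ)) l) fun j hj => by
      rw [Finset.mem_Icc, ← abs_le, not_le] at hj
      rw [hc_supp j hj, norm_zero]
  have top_term : conv (convPow c p) (convPow x (p - p)) n = 0 := by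
    rw [Nat.sub_self, conv_comm, convPow_zero_conv]
    have hlp : (l * p : ℤ) < n := by
      rw [mul_comm]
      exact_mod_cast hN.trans_lt hn
    exact convPow_eq_zero_of_lt_abs hc_supp p n (hlp.trans_le (le_abs_self n))
  rw [norm_mul, norm_div, Complex.norm_natCast, mul_assoc, Finset.sum_mul, add_comm x c,
    convPow_add hc_summable hx.summable_norm, Finset.sum_apply, Finset.sum_range_succ,
    Pi.smul_apply, top_term, smul_zero, add_zero]
  gcongr
  refine norm_sum_le_of_le _ fun k hk => ?_
  have hkp : k < p := Finset.mem_range.1 hk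
  have hlk : l * k ≤ N := hN.trans' (by rw [mul_comm]; gcongr)
  have term_le := norm_conv_convPow_le hc_symm hc_supp hx k (p - k - 1) hlk hn.le
  rw [Nat.sub_add_cancel (Nat.sub_pos_of_lt hkp)] at term_le
  rw [Pi.smul_apply, nsmul_eq_mul, norm_mul, Complex.norm_natCast, mul_assoc]
  gcongr

end HighModes

/-- Lemma `lem:wysoko`: for `c` supported in `[-l,l]`, `x ∈ X_β`, `p > 1`,
`N > pl` and `n > N`, an `n`-uniform estimate of `(K/p!)((x+c)^{*p})_n`. -/
theorem high_modes_estimate (K β : ℝ) (hK : 0 < K) (hβ : 0 < β) (l : ℕ)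
    (c : ℤ → ℂ) (hcX : ∃ β' > 0, memX β' c) (hsupp : ∀ n : ℤ, (l : ℤ) < |n| → c n = 0)
    (p : ℕ) (hp : 1 < p) (N : ℕ) (hN : p * l < N) (x : ℤ → ℂ) (hx : memX β x) :
    ∀ n : ℤ, (N : ℤ) < n →
      ‖(K / (Nat.factorial p : ℂ)) * convPow (x + c) p n‖ ≤
        (K / (Nat.factorial p : ℝ)) *
          (∑ k ∈ Finset.range p, (p.choose k : ℝ) *
            ∑ j ∈ Finset.Icc (-(l * k : ℤ)) (l * k : ℤ),
              ‖convPow c k j‖ * (10 * β) ^ (p - k - 1) *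
                ((N : ℝ) + 1) ^ 2 / (((N : ℝ) - (j : ℝ)) + 1) ^ 2) *
          (β / (|(n : ℝ)| + 1) ^ 2) := by
  obtain ⟨_, _, _, hc_symm⟩ := hcX
  intro n hn
  simpa only [Complex.norm_real, Real.norm_of_nonneg hK.le] using
    high_modes_estimate_general (K : ℂ) hc_symm hsupp (mod_cast hN.le) hx.1 (mod_cast hn)
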